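/- arXiv:2210.12183 — 2 statements merged into one kernel-verified Lean document; each statement's English description precedes it below -/
import Mathlib

section
/- For any 1 ≤ r ≤ M_w, the number of x ∈ 𝔽_q^N with w_{(P,w,π)}(x) = r is |A_r| = Σ_{j=1}^{n} Σ_{I ∈ 𝓘_j^j} Σ_{(b_1,…,b_j) ∈ PRT_0[r] having exactly j parts} Σ_{(b_{m_1},…,b_{m_j}) ∈ ARG[(b_1,…,b_j)]} |D_{b_{m_1}}^{k_{i_1}}|·|D_{b_{m_2}}^{k_{i_2}}|⋯|D_{b_{m_j}}^{k_{i_j}}|, where for I ∈ 𝓘_j^j we write Max(I) = {i_1,…,i_j}. -/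
open scoped Classical

noncomputable section

variable {F : Type*} [Field F] [Fintype F]
variable {ι : Type*} [Fintype ι] [PartialOrder ι]

/-- The block weight induced by `w`: the maximum of the weights of the coordinates. -/
def blockWt (w : F → ℕ) {m : ℕ} (v : Fin m → F) : ℕ :=
  Finset.univ.sup fun t => w (v t)

/-- `M_w`, the maximum weight of an element of `F`. -/
def maxWt (w : F → ℕ) : ℕ := Finset.univ.sup w

/-- `D_r = {α ∈ F : w(α) = r}`. -/
def Dset (w : F → ℕ) (r : ℕ) : Finset F := Finset.univ.filter fun a => w a = r

/-- `D_r^k = {v ∈ F^k : w̃^k(v) = r}`. -/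
def Dk (w : F → ℕ) (m r : ℕ) : Finset (Fin m → F) :=
  Finset.univ.filter fun v => blockWt w v = r

/-- The order ideal (down-set) of the poset generated by a finite set `A`. -/
def genIdeal (A : Finset ι) : Finset ι := Finset.univ.filter fun i => ∃ j ∈ A, i ≤ j

/-- The set of maximal elements of a finite set `I`. -/
def maxElems (I : Finset ι) : Finset ι := I.filter fun i => ∀ j ∈ I, i ≤ j → j = i

/-- `I` is an order ideal (down-set) of the poset. -/
def IsIdeal (I : Finset ι) : Prop := ∀ a b : ι, a ≤ b → b ∈ I → a ∈ I

/-- The collection `𝓘_j^i` of ideals of cardinality `i` with exactly `j` maximal elements. -/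
def idealsWithMax (ι : Type*) [Fintype ι] [PartialOrder ι] (j i : ℕ) : Finset (Finset ι) :=
  Finset.univ.filter fun I => IsIdeal I ∧ I.card = i ∧ (maxElems I).card = j

/-- The π-support of a block vector. -/
def suppPi (k : ι → ℕ) (x : ∀ i, Fin (k i) → F) : Finset ι :=
  Finset.univ.filter fun i => x i ≠ 0

/-- The `(P,w,π)`-weight. -/
def wtP (w : F → ℕ) (k : ι → ℕ) (x : ∀ i, Fin (k i) → F) : ℕ :=
  ∑ i ∈ maxElems (genIdeal (suppPi k x)), blockWt w (x i)
    + maxWt w * ((genIdeal (suppPi k x)) \ maxElems (genIdeal (suppPi k x))).card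

/-- The `(P,w,π)`-distance. -/
def dP (w : F → ℕ) (k : ι → ℕ) (x y : ∀ i, Fin (k i) → F) : ℕ := wtP w k (x - y)

/-- A partition with `|M|` parts, each in `{1,…,R}`, together with an arrangement of its parts
on the set `M` (of maximal elements of an ideal), encoded as the function assigning to each
element of `M` the part placed there; the parts sum to `s` and the function vanishes off `M`. -/
def ARG (M : Finset ι) (R s : ℕ) : Finset (ι → Fin (R + 1)) :=
  Finset.univ.filter fun c =>
    (∀ i ∈ M, 1 ≤ (c i : ℕ)) ∧ (∀ i ∉ M, (c i : ℕ) = 0) ∧ ∑ i ∈ M, (c i : ℕ) = s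

theorem blockWt_eq_zero (w : F → ℕ) (hw0 : ∀ a : F, w a = 0 ↔ a = 0) {m : ℕ} (v : Fin m → F) :
    blockWt w v = 0 ↔ v = 0 := by
  unfold blockWt
  rw [← Nat.bot_eq_zero, Finset.sup_eq_bot_iff]
  simp [hw0, funext_iff]

theorem blockWt_le (w : F → ℕ) {m : ℕ} (v : Fin m → F) : blockWt w v ≤ maxWt w :=
  Finset.sup_le fun t _ => Finset.le_sup (f := w) (Finset.mem_univ (v t))

theorem mem_suppPi_iff (w : F → ℕ) (hw0 : ∀ a : F, w a = 0 ↔ a = 0) (k : ι → ℕ)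
    (x : ∀ i, Fin (k i) → F) (i : ι) : i ∈ suppPi k x ↔ 1 ≤ blockWt w (x i) := by
  have := blockWt_eq_zero w hw0 (x i)
  simp only [suppPi, Finset.mem_filter, Finset.mem_univ, true_and, ne_eq, ← this]
  omega

theorem max_sub_supp (A : Finset ι) : maxElems (genIdeal A) ⊆ A := by
  intro i hi
  simp only [maxElems, genIdeal, Finset.mem_filter, Finset.mem_univ, true_and] at hi
  obtain ⟨⟨j, hj, hij⟩, h⟩ := hi
  have := h j ⟨j, hj, le_rfl⟩ hij
  exact this ▸ hj

theorem genIdeal_of_ideal (A : Finset ι) (h : IsIdeal A) : genIdeal A = A := by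
  ext i
  simp only [genIdeal, Finset.mem_filter, Finset.mem_univ, true_and]
  exact ⟨fun ⟨j, hj, hij⟩ => h i j hij hj, fun hi => ⟨i, hi, le_rfl⟩⟩

theorem genIdeal_ideal (A : Finset ι) : IsIdeal (genIdeal A) := by
  intro a b hab hb
  simp only [genIdeal, Finset.mem_filter, Finset.mem_univ, true_and] at hb ⊢
  obtain ⟨j, hj, h⟩ := hb
  exact ⟨j, hj, hab.trans h⟩

theorem sub_genIdeal (A : Finset ι) : A ⊆ genIdeal A := by
  intro i hi
  simp only [genIdeal, Finset.mem_filter, Finset.mem_univ, true_and]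
  exact ⟨i, hi, le_rfl⟩

theorem max_nonempty (I : Finset ι) (h : I.Nonempty) : (maxElems I).Nonempty := by
  obtain ⟨m, hm⟩ := I.exists_maximal h
  refine ⟨m, ?_⟩
  simp only [maxElems, Finset.mem_filter]
  exact ⟨hm.1, fun j hj hmj => le_antisymm (hm.2 hj hmj) hmj⟩

theorem key (w : F → ℕ) (hw0 : ∀ a : F, w a = 0 ↔ a = 0)
    (k : ι → ℕ) (r : ℕ) (hr2 : r ≤ maxWt w) (x : ∀ i, Fin (k i) → F)
    (h : wtP w k x = r) :
    genIdeal (suppPi k x) = suppPi k x ∧ maxElems (suppPi k x) = suppPi k x := by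
  have hI : genIdeal (suppPi k x) ⊆ maxElems (genIdeal (suppPi k x)) := by
    rw [← Finset.sdiff_eq_empty_iff_subset]
    by_contra hne
    have hpos := Finset.card_pos.mpr (Finset.nonempty_iff_ne_empty.mpr hne)
    obtain ⟨a, ha⟩ := Finset.nonempty_iff_ne_empty.mpr hne
    obtain ⟨m, hm⟩ := max_nonempty _ ⟨a, (Finset.mem_sdiff.mp ha).1⟩
    have h1 := (mem_suppPi_iff w hw0 k x m).mp (max_sub_supp _ hm)
    have h2 := Finset.single_le_sum (f := fun i => blockWt w (x i)) (fun _ _ => Nat.zero_le _) hm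
    have h3 := Nat.le_mul_of_pos_right (maxWt w) hpos
    unfold wtP at h
    omega
  have e1 : genIdeal (suppPi k x) = suppPi k x :=
    Finset.Subset.antisymm (hI.trans (max_sub_supp _)) (sub_genIdeal _)
  rw [e1] at hI
  exact ⟨e1, Finset.Subset.antisymm (Finset.filter_subset _ _) hI⟩

theorem wt_of_anti (w : F → ℕ) (k : ι → ℕ) (x : ∀ i, Fin (k i) → F)
    (h : genIdeal (suppPi k x) = suppPi k x ∧ maxElems (suppPi k x) = suppPi k x) :
    wtP w k x = ∑ i ∈ suppPi k x, blockWt w (x i) := by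
  unfold wtP
  rw [h.1, h.2]
  simp

theorem inner_count (w : F → ℕ) (hw0 : ∀ a : F, w a = 0 ↔ a = 0) (k : ι → ℕ) (r : ℕ)
    (I : Finset ι) :
    ∑ c ∈ ARG I (maxWt w) r, ∏ i ∈ I, (Dk w (k i) (c i : ℕ)).card =
    (Finset.univ.filter fun x : ∀ i, Fin (k i) → F =>
      suppPi k x = I ∧ ∑ i ∈ I, blockWt w (x i) = r).card := by
  rw [Finset.card_eq_sum_card_fiberwise (t := ARG I (maxWt w) r)
    (f := fun x i => ⟨blockWt w (x i), Nat.lt_succ_of_le (blockWt_le w (x i))⟩)]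
  · refine Finset.sum_congr rfl fun c hc => ?_
    simp only [ARG, Finset.mem_filter, Finset.mem_univ, true_and] at hc
    obtain ⟨h1, h2, h3⟩ := hc
    have e : ∏ i ∈ I, (Dk w (k i) (c i : ℕ)).card = ∏ i, (Dk w (k i) (c i : ℕ)).card := by
      refine Finset.prod_subset (Finset.subset_univ _) fun i _ hi => ?_
      rw [h2 i hi, Finset.card_eq_one]
      refine ⟨0, ?_⟩
      ext v
      simp [Dk, blockWt_eq_zero w hw0]
    rw [e, ← Fintype.card_piFinset]
    congr 1
    ext x
    simp only [Fintype.mem_piFinset, Dk, Finset.mem_filter, Finset.mem_univ, true_and,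
      funext_iff, Fin.ext_iff]
    constructor
    · intro h
      refine ⟨⟨?_, ?_⟩, h⟩
      · ext i
        rw [mem_suppPi_iff w hw0, h i]
        constructor
        · intro h'
          by_contra hi
          have := h2 i hi
          omega
        · exact h1 i
      · rw [← h3]
        exact Finset.sum_congr rfl fun i _ => h i
    · exact fun h => h.2
  · intro x hx
    simp only [Finset.coe_filter, Finset.mem_univ, true_and, Set.mem_ofPred_eq] at hx
    obtain ⟨rfl, h⟩ := hx
    simp only [ARG, Finset.coe_filter, Finset.mem_univ, true_and, Set.mem_ofPred_eq]
    refine ⟨fun i hi => (mem_suppPi_iff w hw0 k x i).mp hi, fun i hi => ?_, h⟩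
    rw [mem_suppPi_iff w hw0] at hi
    omega

/-- the number of vectors of `(P,w,π)`-weight `r` for `1 ≤ r ≤ M_w`, obtained by
summing, over all ideals `I` with all elements maximal and over all partitions of `r` into
`|Max(I)|` parts together with all arrangements of the parts on `Max(I)`, the products
`|D_{b_{m_1}}^{k_{i_1}}| ⋯ |D_{b_{m_j}}^{k_{i_j}}|`. -/
theorem stmt2 (w : F → ℕ) (hw0 : ∀ a : F, w a = 0 ↔ a = 0)
    (hwneg : ∀ a : F, w (-a) = w a) (hwadd : ∀ a b : F, w (a + b) ≤ w a + w b)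
    (k : ι → ℕ) (r : ℕ) (hr1 : 1 ≤ r) (hr2 : r ≤ maxWt w) :
    (Finset.univ.filter fun x : ∀ i, Fin (k i) → F => wtP w k x = r).card =
      ∑ j ∈ Finset.Icc 1 (Fintype.card ι), ∑ I ∈ idealsWithMax ι j j,
        ∑ c ∈ ARG (maxElems I) (maxWt w) r,
          ∏ i ∈ maxElems I, (Dk w (k i) (c i : ℕ)).card := by
  rw [Finset.card_eq_sum_card_fiberwise (t := Finset.Icc 1 (Fintype.card ι))
    (f := fun x => (suppPi k x).card)]
  · refine Finset.sum_congr rfl fun j _ => ?_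
    rw [Finset.card_eq_sum_card_fiberwise (t := idealsWithMax ι j j) (f := fun x => suppPi k x)]
    · refine Finset.sum_congr rfl fun I hI => ?_
      simp only [idealsWithMax, Finset.mem_filter, Finset.mem_univ, true_and] at hI
      obtain ⟨hid, hc, hm⟩ := hI
      have hmax : maxElems I = I :=
        Finset.eq_of_subset_of_card_le (Finset.filter_subset _ _) (by omega)
      rw [hmax, inner_count w hw0]
      congr 1
      ext x
      simp only [Finset.mem_filter, Finset.mem_univ, true_and]
      constructor
      · rintro ⟨⟨h, -⟩, rfl⟩
        exact ⟨rfl, by rw [← wt_of_anti w k x (key w hw0 k r hr2 x h), h]⟩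
      · rintro ⟨rfl, h⟩
        exact ⟨⟨by rw [wt_of_anti w k x ⟨genIdeal_of_ideal _ hid, hmax⟩, h], hc⟩, rfl⟩
    · intro x hx
      simp only [Finset.coe_filter, Finset.mem_filter, Finset.mem_univ, true_and,
        Set.mem_ofPred_eq] at hx
      obtain ⟨h, hj⟩ := hx
      have hk := key w hw0 k r hr2 x h
      simp only [idealsWithMax, Finset.coe_filter, Finset.mem_univ, true_and, Set.mem_ofPred_eq]
      exact ⟨hk.1 ▸ genIdeal_ideal _, hj, by rw [hk.2, hj]⟩
  · intro x hx
    simp only [Finset.coe_filter, Finset.mem_univ, true_and, Set.mem_ofPred_eq] at hx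
    have hs := wt_of_anti w k x (key w hw0 k r hr2 x hx)
    simp only [Finset.coe_Icc, Set.mem_Icc]
    refine ⟨?_, Finset.card_le_univ _⟩
    rw [Nat.one_le_iff_ne_zero]
    intro h0
    rw [Finset.card_eq_zero] at h0
    rw [h0, Finset.sum_empty] at hs
    omega
end
end

section
/- Suppose k_i = k for all i ∈ [n] and let C ⊆ 𝔽_q^N be a (P,w,π)-code with at least two codewords and minimum distance d_{(P,w,π)}(C). If C is MDS (i.e., max_{J ∈ 𝓘^r} Σ_{i∈J} k_i = N − ⌈log_q |C|⌉ where r = ⌊(d_{(P,w,π)}(C)−1)/M_w⌋), then M_w·(n − ⌈log_q |C|⌉/k) + 1 ≤ d_{(P,w,π)}(C) ≤ M_w·(n − ⌈log_q |C|⌉/k + 1). -/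
open scoped Classical

noncomputable section

variable {F : Type*} [Field F] [Fintype F]
variable {ι : Type*} [Fintype ι] [PartialOrder ι]

/-- The collection `𝓘^r` of ideals of cardinality `r`. -/
def idealsCard (ι : Type*) [Fintype ι] [PartialOrder ι] (r : ℕ) : Finset (Finset ι) :=
  Finset.univ.filter fun I => IsIdeal I ∧ I.card = r

theorem exists_ideal_card (r : ℕ) (hr : r ≤ Fintype.card ι) :
    ∃ I : Finset ι, IsIdeal I ∧ I.card = r := by
  induction r with
  | zero => exact ⟨∅, fun a b _ h => by simp at h, rfl⟩
  | succ r ih =>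
    obtain ⟨I, hI, hc⟩ := ih (by omega)
    have hne : (Iᶜ : Finset ι).Nonempty := by
      rw [← Finset.card_pos, Finset.card_compl]; omega
    obtain ⟨m, hm⟩ := Finset.exists_minimal hne
    have hmI : m ∉ I := Finset.mem_compl.1 hm.1
    refine ⟨insert m I, ?_, by rw [Finset.card_insert_of_notMem hmI, hc]⟩
    intro a b hab hb
    rw [Finset.mem_insert] at hb ⊢
    rcases hb with rfl | hb
    · by_cases ha : a ∈ I
      · exact Or.inr ha
      · exact Or.inl (le_antisymm hab (hm.2 (Finset.mem_compl.2 ha) hab))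
    · exact Or.inr (hI a b hab hb)

theorem w_le_maxWt (w : F → ℕ) (a : F) : w a ≤ maxWt w :=
  Finset.le_sup (f := w) (Finset.mem_univ a)

theorem wtP_pos (w : F → ℕ) (hw0 : ∀ a : F, w a = 0 ↔ a = 0) (k : ι → ℕ)
    (x : ∀ i, Fin (k i) → F) (hx : x ≠ 0) : 0 < wtP w k x := by
  obtain ⟨i, hi⟩ := Function.ne_iff.1 hx
  have hne : (genIdeal (suppPi k x)).Nonempty :=
    ⟨i, by simp only [genIdeal, suppPi, Finset.mem_filter, Finset.mem_univ, true_and]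
           exact ⟨i, hi, le_rfl⟩⟩
  obtain ⟨m, hm⟩ := Finset.exists_maximal hne
  have hmm : m ∈ maxElems (genIdeal (suppPi k x)) := by
    simp only [maxElems, Finset.mem_filter]
    exact ⟨hm.1, fun j hj h => le_antisymm (hm.2 hj h) h⟩
  have hmx : x m ≠ 0 := by
    have h1 := hm.1
    simp only [genIdeal, Finset.mem_filter, Finset.mem_univ, true_and] at h1
    obtain ⟨j, hj, hmj⟩ := h1
    have hjI : j ∈ genIdeal (suppPi k x) := by
      simp only [genIdeal, Finset.mem_filter, Finset.mem_univ, true_and]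
      exact ⟨j, hj, le_rfl⟩
    have : m = j := le_antisymm hmj (hm.2 hjI hmj)
    subst this
    simpa [suppPi] using hj
  obtain ⟨t, ht⟩ := Function.ne_iff.1 hmx
  have h1 : 0 < w (x m t) := Nat.pos_of_ne_zero fun h => ht ((hw0 _).1 h)
  have h2 : w (x m t) ≤ blockWt w (x m) :=
    Finset.le_sup (f := fun t => w (x m t)) (Finset.mem_univ t)
  have h3 := Finset.single_le_sum (f := fun i => blockWt w (x i)) (fun _ _ => Nat.zero_le _) hmm
  unfold wtP
  omega

theorem wtP_le (w : F → ℕ) (k : ι → ℕ) (x : ∀ i, Fin (k i) → F) :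
    wtP w k x ≤ maxWt w * Fintype.card ι := by
  unfold wtP
  set I := genIdeal (suppPi k x)
  have h1 : ∑ i ∈ maxElems I, blockWt w (x i) ≤ (maxElems I).card * maxWt w := by
    rw [← smul_eq_mul]
    exact Finset.sum_le_card_nsmul _ _ _ fun i _ => Finset.sup_le fun t _ => w_le_maxWt w _
  have hs : maxElems I ⊆ I := Finset.filter_subset _ _
  have h2 := Finset.card_sdiff_add_card_eq_card hs
  have h3 : I.card ≤ Fintype.card ι := Finset.card_le_univ I
  calc _ ≤ (maxElems I).card * maxWt w + maxWt w * (I \ maxElems I).card := by gcongr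
    _ = maxWt w * ((I \ maxElems I).card + (maxElems I).card) := by ring
    _ ≤ _ := by rw [h2]; gcongr

/-- when all blocks have dimension `k`, if a `(P,w,π)`-code is MDS (it attains the
Singleton bound with equality), then
`M_w·(n - ⌈log_q |C|⌉/k) + 1 ≤ d_{(P,w,π)}(C) ≤ M_w·(n - ⌈log_q |C|⌉/k + 1)`. -/
theorem stmt15 (w : F → ℕ) (hw0 : ∀ a : F, w a = 0 ↔ a = 0)
    (hwneg : ∀ a : F, w (-a) = w a) (hwadd : ∀ a b : F, w (a + b) ≤ w a + w b)
    (k : ℕ) (C : Finset (∀ _ : ι, Fin k → F)) (hC : 2 ≤ C.card)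
    (d : ℕ)
    (hd : d = sInf {s : ℕ | ∃ c₁ ∈ C, ∃ c₂ ∈ C, c₁ ≠ c₂ ∧ dP w (fun _ => k) c₁ c₂ = s})
    (hMDS : (idealsCard ι ((d - 1) / maxWt w)).sup (fun J => ∑ _i ∈ J, k) =
      Fintype.card ι * k - Nat.clog (Fintype.card F) C.card) :
    maxWt w * (Fintype.card ι - Nat.clog (Fintype.card F) C.card / k) + 1 ≤ d ∧
      d ≤ maxWt w * (Fintype.card ι - Nat.clog (Fintype.card F) C.card / k + 1) := by
  have hM : 0 < maxWt w := by
    have h1 : 0 < w 1 := Nat.pos_of_ne_zero fun h => one_ne_zero ((hw0 _).1 h)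
    exact h1.trans_le (w_le_maxWt w 1)
  obtain ⟨a, ha, b, hb, hab⟩ := Finset.one_lt_card.1 hC
  have hmem : d ∈ {s : ℕ | ∃ c₁ ∈ C, ∃ c₂ ∈ C, c₁ ≠ c₂ ∧ dP w (fun _ => k) c₁ c₂ = s} := by
    rw [hd]
    exact Nat.sInf_mem ⟨_, a, ha, b, hb, hab, rfl⟩
  obtain ⟨c₁, -, c₂, -, hne, hdd⟩ := hmem
  have hd1 : 0 < d := hdd ▸ wtP_pos w hw0 (fun _ => k) (c₁ - c₂) (sub_ne_zero.2 hne)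
  have hd2 : d ≤ maxWt w * Fintype.card ι := hdd ▸ wtP_le w (fun _ => k) (c₁ - c₂)
  have hk : 0 < k := by
    rcases Nat.eq_zero_or_pos k with rfl | h
    · exact absurd (Subsingleton.elim a b) hab
    · exact h
  have hlog : Nat.clog (Fintype.card F) C.card ≤ Fintype.card ι * k := by
    apply Nat.clog_le_of_le_pow
    refine (Finset.card_le_univ C).trans (le_of_eq ?_)
    simp [Fintype.card_pi, ← pow_mul, mul_comm]
  set L := Nat.clog (Fintype.card F) C.card
  set n := Fintype.card ι
  set r := (d - 1) / maxWt w with hr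
  have hrn : r < n := by
    rw [hr, Nat.div_lt_iff_lt_mul hM, mul_comm]; omega
  have hsup : (idealsCard ι r).sup (fun J => ∑ _i ∈ J, k) = r * k := by
    obtain ⟨I, hI, hc⟩ := exists_ideal_card (ι := ι) r hrn.le
    apply le_antisymm
    · refine Finset.sup_le fun J hJ => ?_
      simp only [idealsCard, Finset.mem_filter] at hJ
      simp [hJ.2.2]
    · have hIm : I ∈ idealsCard ι r := by simp [idealsCard, hI, hc]
      have := Finset.le_sup (f := fun J : Finset ι => ∑ _i ∈ J, k) hIm
      simpa [hc] using this
  rw [hsup] at hMDS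
  have hL : L = (n - r) * k := by
    rw [Nat.sub_mul]; omega
  have hq : n - L / k = r := by
    rw [hL, Nat.mul_div_cancel _ hk]; exact Nat.sub_sub_self hrn.le
  rw [hq]
  have h1 := Nat.mul_div_le (d - 1) (maxWt w)
  have h2 := Nat.lt_mul_div_succ (d - 1) hM
  rw [← hr] at h1 h2
  constructor <;> omega
end
end
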